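/- For the Féjer test function φ(x) = (sin(πδx)/(πδx))², whose Fourier transform is φ̂(y) = δ^{-1} max(1 - |y|/δ, 0), one has ∫_{ℝ} φ(x)·(1 + sin(2πx)/(2πx)) dx = 2/δ - 1/(2δ²) when δ ≥ 1. -/

import Mathlib

open Real MeasureTheory

/-!
The triangle `δ⁻² max (δ - |y|) 0` is the self-convolution of the normalised indicator of
`[-δ/2, δ/2]`, whose Fourier transform is a `sinc`, so its own transform is the Fejér kernel
`sinc² (πδx)`; by Fourier inversion the kernel transforms back to the triangle. Since `sinc (2πax)`
is the transform of the normalised indicator of `[-a, a]`, self-adjointness of the Fourier transform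
turns the integral of the kernel against it into the average of the triangle over `[-a, a]`. The
`sinc` term of the density is the case `a = 1`, and `1 ≤ δ` puts `[-1, 1]` inside the support of the
triangle.
-/

open Set FourierTransform
open scoped Convolution

/-- The normalised indicator function of `[-a, a]`, with values in `ℂ` so that its Fourier transform
can be taken. -/
noncomputable def box (a : ℝ) : ℝ → ℂ := (Icc (-a) a).indicator fun _ => (2 * a : ℂ)⁻¹

/-- The triangle function of half-width `h` and integral one; `tent δ` is the Fourier transform `φ̂`
of the Fejér kernel. -/
noncomputable def tent (h y : ℝ) : ℝ := max (h - |y|) 0 / h ^ 2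

/-- The scaled Fejér kernel `φ`, extended continuously to `x = 0` by means of `sinc`. -/
noncomputable def fejerKernel (δ x : ℝ) : ℝ := sinc (π * δ * x) ^ 2

lemma integrable_box (a : ℝ) : Integrable (box a) :=
  (integrableOn_const (by simp)).integrable_indicator measurableSet_Icc

lemma integral_box_mul {a : ℝ} (ha : 0 ≤ a) (f : ℝ → ℂ) :
    ∫ t, box a t * f t = (2 * a : ℂ)⁻¹ * ∫ t in -a..a, f t := by
  rw [intervalIntegral.integral_of_le (by linarith), ← integral_Icc_eq_integral_Ioc,
    ← integral_const_mul, ← integral_indicator measurableSet_Icc]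
  simp only [box, ← indicator_mul_left]

lemma fourier_box {a : ℝ} (ha : 0 < a) (x : ℝ) : 𝓕 (box a) x = sinc (2 * π * a * x) := by
  have ha' : (a : ℂ) ≠ 0 := by exact_mod_cast ha.ne'
  have h_transform : 𝓕 (box a) x =
      (2 * a : ℂ)⁻¹ * ∫ t in -a..a, Complex.exp (↑(-2 * π * x * t) * Complex.I) := by
    rw [fourier_real_eq_integral_exp_smul, ← integral_box_mul ha.le]
    refine integral_congr_ae (.of_forall fun t => ?_)
    simp only [smul_eq_mul, mul_comm (box a t), mul_right_comm _ x t]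
  rcases eq_or_ne x 0 with rfl | hx
  · have h_unit := inv_mul_cancel₀ (mul_ne_zero two_ne_zero ha')
    simpa [h_transform, ← two_mul] using h_unit
  have hx' : (x : ℂ) ≠ 0 := by exact_mod_cast hx
  have h_freq : -2 * π * x ≠ 0 := by simp [pi_ne_zero, hx]
  rw [h_transform, intervalIntegral.integral_comp_mul_left
    (fun u : ℝ => Complex.exp (u * Complex.I)) h_freq, mul_neg, integral_exp_mul_I_eq_sinc,
    show -2 * π * x * a = -(2 * π * a * x) by ring, sinc_neg, Complex.real_smul]
  push_cast
  field

lemma box_convolution_box (a : ℝ) :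
    box a ⋆[ContinuousLinearMap.mul ℂ ℂ] box a = fun y => (tent (2 * a) y : ℂ) := by
  ext y
  have h_overlap (t : ℝ) : box a t * box a (y - t) =
      (Icc (max (-a) (y - a)) (min a (y + a))).indicator (fun _ => ((2 * a : ℂ) ^ 2)⁻¹) t := by
    have h_reflect : y - t ∈ Icc (-a) a ↔ t ∈ Icc (y - a) (y + a) := by
      simp only [mem_Icc]
      constructor <;> rintro ⟨_, _⟩ <;> constructor <;> linarith
    rw [← Icc_inter_Icc, ← inv_pow, sq, inter_indicator_mul]
    simp only [box, indicator_apply, h_reflect]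
  have h_length : min a (y + a) - max (-a) (y - a) = 2 * a - |y| := by
    rcases le_total 0 y with hy | hy
    · rw [min_eq_left (by linarith), max_eq_right (by linarith), abs_of_nonneg hy]
      ring
    · rw [min_eq_right (by linarith), max_eq_left (by linarith), abs_of_nonpos hy]
      ring
  simp only [convolution_def, ContinuousLinearMap.mul_apply', h_overlap]
  rw [integral_indicator_const _ measurableSet_Icc, Real.volume_real_Icc, h_length, tent,
    Complex.real_smul, ← div_eq_mul_inv]
  push_cast
  rfl

lemma continuous_tent (h : ℝ) : Continuous (tent h) := by
  unfold tent
  fun_prop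

lemma tent_neg (h y : ℝ) : tent h (-y) = tent h y := by
  rw [tent, abs_neg, tent]

lemma tent_zero {h : ℝ} (hh : 0 ≤ h) : tent h 0 = 1 / h := by
  rw [tent, abs_zero, sub_zero, max_eq_left hh]
  field

lemma tent_of_mem_Icc {h y : ℝ} (hy : y ∈ Icc 0 h) : tent h y = (h - y) / h ^ 2 := by
  rw [tent, abs_of_nonneg hy.1, max_eq_left (sub_nonneg.2 hy.2)]

lemma tent_eq_box_convolution_box (h : ℝ) :
    (fun y => (tent h y : ℂ)) = box (h / 2) ⋆[ContinuousLinearMap.mul ℂ ℂ] box (h / 2) := by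
  rw [box_convolution_box, mul_div_cancel₀ h two_ne_zero]

lemma integrable_tent (h : ℝ) : Integrable fun y => (tent h y : ℂ) := by
  rw [tent_eq_box_convolution_box]
  exact (integrable_box _).integrable_convolution _ (integrable_box _)

lemma integral_tent {h a : ℝ} (ha : 0 ≤ a) (hah : a ≤ h) :
    ∫ y in -a..a, tent h y = (2 * a * h - a ^ 2) / h ^ 2 := by
  have h_half : ∫ y in 0..a, tent h y = (a * h - a ^ 2 / 2) / h ^ 2 := by
    have h_linear : EqOn (tent h) (fun y => (h - y) / h ^ 2) (uIcc 0 a) := fun y hy =>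
      tent_of_mem_Icc (Icc_subset_Icc_right hah (uIcc_of_le ha ▸ hy))
    rw [intervalIntegral.integral_congr h_linear, intervalIntegral.integral_div,
      intervalIntegral.integral_sub (by simp) (by simp)]
    simp
  have h_even : ∫ y in -a..0, tent h y = ∫ y in 0..a, tent h y := by
    simpa [tent_neg] using (intervalIntegral.integral_comp_neg (a := 0) (b := a) (tent h)).symm
  have h_int (b c : ℝ) : IntervalIntegrable (tent h) volume b c :=
    (continuous_tent h).intervalIntegrable b c
  rw [← intervalIntegral.integral_add_adjacent_intervals (h_int _ 0) (h_int 0 _), h_even, h_half]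
  ring

lemma fourier_tent {h : ℝ} (hh : 0 < h) :
    𝓕 (fun y => (tent h y : ℂ)) = fun x => (fejerKernel h x : ℂ) := by
  ext x
  rw [tent_eq_box_convolution_box, fourier_mul_convolution_eq (integrable_box _) (integrable_box _),
    fourier_box (by positivity), fejerKernel, show 2 * π * (h / 2) * x = π * h * x by ring, sq,
    Complex.ofReal_mul]

lemma integrable_sinc_sq : Integrable fun x => sinc x ^ 2 := by
  refine (integrable_inv_one_add_sq.const_mul 2).mono' (by fun_prop) (.of_forall fun x => ?_)
  have h_sinc : sinc x ^ 2 ≤ 1 := (sq_le_one_iff_abs_le_one _).2 (abs_sinc_le_one x)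
  have h_mul_sinc : x * sinc x = sin x := by
    rcases eq_or_ne x 0 with rfl | hx
    · simp
    · rw [sinc_of_ne_zero hx, mul_div_cancel₀ _ hx]
  have h_sin : (x * sinc x) ^ 2 ≤ 1 := h_mul_sinc ▸ sin_sq_le_one x
  rw [norm_of_nonneg (sq_nonneg _), ← div_eq_mul_inv, le_div_iff₀ (by positivity)]
  linarith

lemma integrable_fejerKernel {δ : ℝ} (hδ : δ ≠ 0) : Integrable (fejerKernel δ) :=
  integrable_sinc_sq.comp_mul_left' (mul_ne_zero pi_ne_zero hδ)

lemma fourier_fejerKernel {δ : ℝ} (hδ : 0 < δ) :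
    𝓕 (fun x => (fejerKernel δ x : ℂ)) = fun y => (tent δ y : ℂ) := by
  have h_cont : Continuous fun y => (tent δ y : ℂ) :=
    Complex.continuous_ofReal.comp (continuous_tent δ)
  have h_int : Integrable (𝓕 fun y => (tent δ y : ℂ)) := by
    rw [fourier_tent hδ]
    exact (integrable_fejerKernel hδ.ne').ofReal
  ext y
  simpa only [fourierInv_eq_fourier_neg, neg_neg, fourier_tent hδ, tent_neg] using
    congrFun (h_cont.fourierInv_fourier_eq (integrable_tent δ) h_int) (-y)

lemma integral_mul_sinc {f : ℝ → ℂ} (hf : Integrable f) {a : ℝ} (ha : 0 < a) :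
    ∫ x, f x * sinc (2 * π * a * x) = (2 * a : ℂ)⁻¹ * ∫ y in -a..a, 𝓕 f y := by
  have h_adjoint : ∫ x, 𝓕 (box a) x * f x = ∫ y, box a y * 𝓕 f y := by
    simpa using! VectorFourier.integral_fourierIntegral_smul_eq_flip (L := innerₗ ℝ)
      continuous_fourierChar continuous_inner (integrable_box a) hf
  rw [← integral_box_mul ha.le, ← h_adjoint]
  simp only [fourier_box ha, mul_comm (f _)]

lemma integral_fejerKernel {δ : ℝ} (hδ : 0 < δ) : ∫ x, fejerKernel δ x = 1 / δ := by
  have h_zero : ∫ x, (fejerKernel δ x : ℂ) = tent δ 0 := by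
    simpa [fourier_real_eq] using congrFun (fourier_fejerKernel hδ) 0
  rw [integral_complex_ofReal, tent_zero hδ.le] at h_zero
  exact_mod_cast h_zero

lemma integral_fejerKernel_mul_sinc {δ a : ℝ} (ha : 0 < a) (haδ : a ≤ δ) :
    ∫ x, fejerKernel δ x * sinc (2 * π * a * x) = 1 / δ - a / (2 * δ ^ 2) := by
  have hδ : 0 < δ := ha.trans_le haδ
  have h_average : ∫ x, fejerKernel δ x * sinc (2 * π * a * x) =
      (2 * a)⁻¹ * ∫ y in -a..a, tent δ y := by
    have h_complex := integral_mul_sinc (integrable_fejerKernel hδ.ne').ofReal ha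
    rw [RCLike.ofReal_eq_complex_ofReal, fourier_fejerKernel hδ,
      intervalIntegral.integral_ofReal] at h_complex
    simp only [← Complex.ofReal_mul, integral_complex_ofReal] at h_complex
    exact_mod_cast h_complex
  rw [h_average, integral_tent ha.le haδ]
  field

theorem fejer_SO_even (δ : ℝ) (hδ : 1 ≤ δ) :
    (∫ x : ℝ, (Real.sin (Real.pi * δ * x) / (Real.pi * δ * x)) ^ 2 *
        (1 + Real.sin (2 * Real.pi * x) / (2 * Real.pi * x))) =
      2 / δ - 1 / (2 * δ ^ 2) := by
  have hδ_pos : 0 < δ := by linarith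
  have h_int := integrable_fejerKernel hδ_pos.ne'
  have h_int_mul_sinc : Integrable fun x => fejerKernel δ x * sinc (2 * π * 1 * x) :=
    h_int.mul_bdd (c := 1) (by fun_prop) (.of_forall fun x => abs_sinc_le_one _)
  calc
    _ = ∫ x, (fejerKernel δ x + fejerKernel δ x * sinc (2 * π * 1 * x)) := by
      -- At `x = 0` the quotients have the junk value `0`, while `sinc 0 = 1`.
      refine integral_congr_ae ?_
      filter_upwards [Measure.ae_ne volume 0] with x hx
      rw [fejerKernel, sinc_of_ne_zero (by positivity), sinc_of_ne_zero (by positivity), mul_one]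
      ring
    _ = 1 / δ + (1 / δ - 1 / (2 * δ ^ 2)) := by
      rw [integral_add h_int h_int_mul_sinc, integral_fejerKernel hδ_pos,
        integral_fejerKernel_mul_sinc one_pos hδ]
    _ = 2 / δ - 1 / (2 * δ ^ 2) := by ring
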